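/- arXiv:2509.07172 — 6 statements merged into one kernel-verified Lean document; each statement's English description precedes it below -/
import Mathlib

section
/- Let f : ℝ → ℝ be measurable and nonnegative on (0,∞), and let a > 0 and b > -1 be real numbers such that f(x)/(a·x^b) → 1 as x → 0⁺. Then f is integrable on (0,γ) for all sufficiently small γ > 0, and (∫_{0}^{γ} f(u) du) / ( (a/(b+1))·γ^(b+1) ) → 1 as γ → 0⁺. (This is the passage from the asymptotic PDF f(γ) ∼ a·γ^b to the asymptotic CDF F(γ) ∼ (a/(1+b))·γ^(1+b).) -/
/-!
Write `g x = a * x ^ b`. The hypothesis says that for each `ε > 0` one has `|f - g| ≤ ε g` on some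
interval `(0, δ]`. Since `b > -1`, `g` is integrable there with
`∫ u in (0, γ], g u = a / (b + 1) * γ ^ (b + 1)`. So `f` is integrable on `(0, δ]` by domination,
and integrating the inequality gives `|∫ f - ∫ g| ≤ ε ∫ g` for every `γ ≤ δ`, which is the claim
after division by `∫ g > 0`.
-/

open MeasureTheory Topology Filter

lemma integrableOn_const_mul_rpow (a b γ : ℝ) (hb : -1 < b) (hγ : 0 < γ) :
    IntegrableOn (fun x : ℝ => a * x ^ b) (Set.Ioc 0 γ) :=
  Integrable.const_mul ((intervalIntegrable_iff_integrableOn_Ioc_of_le hγ.le).1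
    (intervalIntegral.intervalIntegrable_rpow' hb)) a

lemma setIntegral_const_mul_rpow (a b γ : ℝ) (hb : -1 < b) (hγ : 0 < γ) :
    ∫ x in Set.Ioc (0 : ℝ) γ, a * x ^ b = a / (b + 1) * γ ^ (b + 1) := by
  rw [← intervalIntegral.integral_of_le hγ.le, intervalIntegral.integral_const_mul,
    integral_rpow (Or.inl hb), Real.zero_rpow (by linarith)]
  ring

/-- Asymptotic equality at `0⁺` as a uniform relative error bound on an interval `(0, δ]`. -/
lemma exists_abs_sub_le (f : ℝ → ℝ) (a b : ℝ) (ha : 0 < a)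
    (hf : Tendsto (fun x => f x / (a * x ^ b)) (𝓝[>] 0) (𝓝 1)) (ε : ℝ) (hε : 0 < ε) :
    ∃ δ > 0, ∀ x ∈ Set.Ioc (0 : ℝ) δ, |f x - a * x ^ b| ≤ ε * (a * x ^ b) := by
  have h := hf.eventually (Metric.closedBall_mem_nhds 1 hε)
  obtain ⟨δ, hδ, hsub⟩ := mem_nhdsGT_iff_exists_Ioc_subset.1 h
  refine ⟨δ, hδ, fun x hx => ?_⟩
  have hg : 0 < a * x ^ b := mul_pos ha (Real.rpow_pos_of_pos hx.1 b)
  have hx' : |f x / (a * x ^ b) - 1| ≤ ε := hsub hx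
  rwa [div_sub_one hg.ne', abs_div, abs_of_pos hg, div_le_iff₀ hg] at hx'

/-- Passage from the asymptotic PDF `f(γ) ∼ a·γ^b` to the asymptotic CDF
`F(γ) = ∫₀^γ f(u) du ∼ (a/(1+b))·γ^(1+b)` as `γ → 0⁺`. -/
theorem stmt_2 (f : ℝ → ℝ) (hmeas : Measurable f)
    (hnonneg : ∀ x ∈ Set.Ioi (0 : ℝ), 0 ≤ f x)
    (a b : ℝ) (ha : 0 < a) (hb : -1 < b)
    (hf : Tendsto (fun x => f x / (a * x ^ b)) (𝓝[>] 0) (𝓝 1)) :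
    (∃ γ₀ > 0, ∀ γ, 0 < γ → γ ≤ γ₀ → IntegrableOn f (Set.Ioc 0 γ)) ∧
      Tendsto (fun γ => (∫ u in Set.Ioc (0 : ℝ) γ, f u) / ((a / (b + 1)) * γ ^ (b + 1)))
        (𝓝[>] 0) (𝓝 1) := by
  have key : ∀ ε > 0, ∃ δ > 0, ∀ γ, 0 < γ → γ ≤ δ → IntegrableOn f (Set.Ioc 0 γ) ∧
      |(∫ u in Set.Ioc (0 : ℝ) γ, f u) - a / (b + 1) * γ ^ (b + 1)|
        ≤ ε * (a / (b + 1) * γ ^ (b + 1)) := by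
    intro ε hε
    obtain ⟨δ, hδ, h⟩ := exists_abs_sub_le f a b ha hf ε hε
    refine ⟨δ, hδ, fun γ hγ hγδ => ?_⟩
    have hg := integrableOn_const_mul_rpow a b γ hb hγ
    have hae : ∀ᵐ x ∂volume.restrict (Set.Ioc (0 : ℝ) γ),
        ‖f x - a * x ^ b‖ ≤ ε * (a * x ^ b) :=
      (ae_restrict_iff' measurableSet_Ioc).2
        (Eventually.of_forall fun x hx => h x ⟨hx.1, hx.2.trans hγδ⟩)
    have hdom := Integrable.const_mul hg ε
    have hsub : IntegrableOn (fun x => f x - a * x ^ b) (Set.Ioc 0 γ) :=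
      Integrable.mono' hdom (hmeas.aestronglyMeasurable.sub hg.aestronglyMeasurable) hae
    have hfi : IntegrableOn f (Set.Ioc 0 γ) := by
      simpa [IntegrableOn, Pi.add_def] using Integrable.add hsub hg
    refine ⟨hfi, ?_⟩
    have hle := norm_integral_le_of_norm_le hdom hae
    rwa [integral_sub hfi hg, integral_const_mul ε, setIntegral_const_mul_rpow a b γ hb hγ,
      Real.norm_eq_abs] at hle
  constructor
  · obtain ⟨δ, hδ, h⟩ := key 1 one_pos
    exact ⟨δ, hδ, fun γ hγ hγδ => (h γ hγ hγδ).1⟩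
  · refine Metric.nhds_basis_closedBall.tendsto_right_iff.2 fun ε hε => ?_
    obtain ⟨δ, hδ, h⟩ := key ε hε
    filter_upwards [Ioc_mem_nhdsGT hδ] with γ hγ
    have hG : 0 < a / (b + 1) * γ ^ (b + 1) :=
      mul_pos (div_pos ha (by linarith)) (Real.rpow_pos_of_pos hγ.1 _)
    rw [Metric.mem_closedBall, Real.dist_eq, div_sub_one hG.ne', abs_div, abs_of_pos hG,
      div_le_iff₀ hG]
    exact (h γ hγ.1 hγ.2).2
end

section
/- Let (Ω, P) be a probability space and S : Ω → ℝ a random variable with S ≥ 0 almost surely, whose law has density f with respect to Lebesgue measure on ℝ. Let a > 0, b > -1, and c > 0 be real numbers, and assume f(s)/(a·s^b) → 1 as s → 0⁺. Then P(c·S² ≤ x) / ( (a/(b+1))·(x/c)^((b+1)/2) ) → 1 as x → 0⁺. -/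
open MeasureTheory Topology Filter
open scoped ENNReal NNReal

/-!
For `x > 0` and `S ≥ 0`, the event `c * S ^ 2 ≤ x` is `S ≤ t` with `t = √(x / c)`, so its
probability is `∫ s in (0, t], f s` (the point `0` carries no mass). Near `0` the density lies
between `(1 - ε) * a * s ^ b` and `(1 + ε) * a * s ^ b`; integrating these bounds traps the
probability between `(1 ± ε) * (a / (b + 1)) * t ^ (b + 1)`, and
`t ^ (b + 1) = (x / c) ^ ((b + 1) / 2)`.
-/

lemma lintegral_Ioc_rpow (k b t : ℝ) (hk : 0 ≤ k) (hb : -1 < b) (ht : 0 < t) :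
    ∫⁻ s in Set.Ioc 0 t, ENNReal.ofReal (k * s ^ b) =
      ENNReal.ofReal (k * (t ^ (b + 1) / (b + 1))) := by
  have hint : IntegrableOn (fun s : ℝ => k * s ^ b) (Set.Ioc 0 t) :=
    (((intervalIntegral.intervalIntegrable_rpow' hb).1).const_mul k)
  rw [← ofReal_integral_eq_lintegral_ofReal hint]
  · rw [← intervalIntegral.integral_of_le ht.le, intervalIntegral.integral_const_mul,
      integral_rpow (Or.inl hb), Real.zero_rpow (by linarith), sub_zero]
  · filter_upwards [ae_restrict_mem measurableSet_Ioc] with s hs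
    exact mul_nonneg hk (Real.rpow_nonneg hs.1.le b)

lemma measure_mul_sq_le {Ω : Type*} [MeasurableSpace Ω] (P : Measure Ω)
    (S : Ω → ℝ) (hS : Measurable S) (hS0 : ∀ᵐ ω ∂P, 0 ≤ S ω) (f : ℝ → ℝ≥0)
    (hdens : Measure.map S P = volume.withDensity (fun x => (f x : ℝ≥0∞)))
    (c x : ℝ) (hc : 0 < c) :
    P {ω | c * S ω ^ 2 ≤ x} = ∫⁻ s in Set.Ioc 0 √(x / c), (f s : ℝ≥0∞) := by
  by_cases hx : 0 ≤ x
  · have h1 : P {ω | c * S ω ^ 2 ≤ x} = P (S ⁻¹' Set.Icc 0 √(x / c)) := by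
      apply measure_congr
      filter_upwards [hS0] with ω hω
      apply propext
      change c * S ω ^ 2 ≤ x ↔ 0 ≤ S ω ∧ S ω ≤ √(x / c)
      rw [Real.le_sqrt hω (by positivity), le_div_iff₀ hc, mul_comm]
      exact ⟨fun h => ⟨hω, h⟩, fun h => h.2⟩
    rw [h1, ← Measure.map_apply hS measurableSet_Icc, hdens,
      withDensity_apply _ measurableSet_Icc]
    exact setLIntegral_congr Ioc_ae_eq_Icc.symm
  · have h1 : {ω | c * S ω ^ 2 ≤ x} = ∅ := by
      ext ω
      have : 0 ≤ c * S ω ^ 2 := by positivity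
      simp only [Set.mem_ofPred_eq, Set.mem_empty_iff_false, iff_false]
      linarith
    have h2 : √(x / c) = 0 :=
      Real.sqrt_eq_zero_of_nonpos (div_nonpos_of_nonpos_of_nonneg (by linarith) hc.le)
    simp [h1, h2]

/-- An asymptotic equivalence `f s ∼ a * s ^ b` at `0⁺` may be integrated from `0` to `t`. -/
lemma tendsto_lintegral_Ioc_div (f : ℝ → ℝ≥0) (a b : ℝ) (ha : 0 < a) (hb : -1 < b)
    (hfin : ∀ t, ∫⁻ s in Set.Ioc 0 t, (f s : ℝ≥0∞) ≠ ⊤)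
    (hasymp : Tendsto (fun s => (f s : ℝ) / (a * s ^ b)) (𝓝[>] 0) (𝓝 1)) :
    Tendsto (fun t => (∫⁻ s in Set.Ioc 0 t, (f s : ℝ≥0∞)).toReal /
        ((a / (b + 1)) * t ^ (b + 1))) (𝓝[>] 0) (𝓝 1) := by
  rw [Metric.tendsto_nhds]
  intro ε hε
  -- Integration turns strict bounds into weak ones, hence the margin `η < ε`;
  -- `η ≤ 1` keeps the lower bound nonnegative.
  obtain ⟨η, hη, hηε, hη1⟩ : ∃ η : ℝ, 0 < η ∧ η < ε ∧ η ≤ 1 :=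
    ⟨min (ε / 2) 1, by positivity, lt_of_le_of_lt (min_le_left _ _) (by linarith),
      min_le_right _ _⟩
  obtain ⟨δ, hδ, hball⟩ := mem_nhdsGT_iff_exists_Ioo_subset.1
    ((Metric.tendsto_nhds.1 hasymp) η hη)
  filter_upwards [Ioo_mem_nhdsGT hδ] with t ht
  have hbound : ∀ s ∈ Set.Ioc 0 t, (1 - η) * a * s ^ b ≤ f s ∧
      (f s : ℝ) ≤ (1 + η) * a * s ^ b := by
    intro s hs
    have h := hball ⟨hs.1, hs.2.trans_lt ht.2⟩
    have hpos : 0 < a * s ^ b := mul_pos ha (Real.rpow_pos_of_pos hs.1 b)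
    rw [Set.mem_ofPred_eq, Real.dist_eq, abs_lt] at h
    have h1 : 1 - η ≤ f s / (a * s ^ b) := by linarith [h.1]
    have h2 : f s / (a * s ^ b) ≤ 1 + η := by linarith [h.2]
    rw [le_div_iff₀ hpos] at h1
    rw [div_le_iff₀ hpos] at h2
    constructor <;> linarith
  have hb1 : 0 < b + 1 := by linarith
  have htp : 0 < t ^ (b + 1) := Real.rpow_pos_of_pos ht.1 _
  have hG : 0 < a / (b + 1) * t ^ (b + 1) := by positivity
  have hlow : (1 - η) * (a / (b + 1) * t ^ (b + 1)) ≤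
      (∫⁻ s in Set.Ioc 0 t, (f s : ℝ≥0∞)).toReal := by
    rw [← ENNReal.ofReal_le_iff_le_toReal (hfin t)]
    calc _ = ENNReal.ofReal ((1 - η) * a * (t ^ (b + 1) / (b + 1))) := by
          congr 1; ring
      _ = ∫⁻ s in Set.Ioc 0 t, ENNReal.ofReal ((1 - η) * a * s ^ b) :=
          (lintegral_Ioc_rpow _ b t (mul_nonneg (by linarith) ha.le) hb ht.1).symm
      _ ≤ _ := setLIntegral_mono' measurableSet_Ioc fun s hs => by
          rw [← ENNReal.ofReal_coe_nnreal]
          exact ENNReal.ofReal_le_ofReal (hbound s hs).1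
  have hupp : (∫⁻ s in Set.Ioc 0 t, (f s : ℝ≥0∞)).toReal ≤
      (1 + η) * (a / (b + 1) * t ^ (b + 1)) := by
    apply ENNReal.toReal_le_of_le_ofReal (by positivity)
    calc _ ≤ ∫⁻ s in Set.Ioc 0 t, ENNReal.ofReal ((1 + η) * a * s ^ b) :=
          setLIntegral_mono' measurableSet_Ioc fun s hs => by
            rw [← ENNReal.ofReal_coe_nnreal]
            exact ENNReal.ofReal_le_ofReal (hbound s hs).2
      _ = ENNReal.ofReal ((1 + η) * a * (t ^ (b + 1) / (b + 1))) :=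
          lintegral_Ioc_rpow _ b t (by positivity) hb ht.1
      _ = _ := by congr 1; ring
  rw [← le_div_iff₀ hG] at hlow
  rw [← div_le_iff₀ hG] at hupp
  rw [Real.dist_eq, abs_lt]
  constructor <;> linarith

/-- If a nonnegative random variable `S` has density `f` with `f(s) ∼ a·s^b` as
`s → 0⁺`, then for `c > 0`,
`P(c·S² ≤ x) ∼ (a/(b+1))·(x/c)^((b+1)/2)` as `x → 0⁺`. -/
theorem stmt_3 {Ω : Type*} [MeasurableSpace Ω] (P : Measure Ω) [IsProbabilityMeasure P]
    (S : Ω → ℝ) (hS : Measurable S) (hS0 : ∀ᵐ ω ∂P, 0 ≤ S ω)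
    (f : ℝ → ℝ≥0) (hf : Measurable f)
    (hdens : Measure.map S P = volume.withDensity (fun x => (f x : ℝ≥0∞)))
    (a b c : ℝ) (ha : 0 < a) (hb : -1 < b) (hc : 0 < c)
    (hasymp : Tendsto (fun s => (f s : ℝ) / (a * s ^ b)) (𝓝[>] 0) (𝓝 1)) :
    Tendsto (fun x => (P {ω | c * S ω ^ 2 ≤ x}).toReal /
        ((a / (b + 1)) * (x / c) ^ ((b + 1) / 2))) (𝓝[>] 0) (𝓝 1) := by
  have hfin : ∀ t, ∫⁻ s in Set.Ioc 0 t, (f s : ℝ≥0∞) ≠ ⊤ := by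
    intro t
    rw [← withDensity_apply _ measurableSet_Ioc, ← hdens]
    exact measure_ne_top _ _
  have hsqrt : Tendsto (fun x : ℝ => √(x / c)) (𝓝[>] 0) (𝓝[>] 0) := by
    apply tendsto_nhdsWithin_of_tendsto_nhds_of_eventually_within
    · have h : Continuous fun x : ℝ => √(x / c) := by fun_prop
      simpa using (h.tendsto 0).mono_left nhdsWithin_le_nhds
    · filter_upwards [self_mem_nhdsWithin] with x hx
      exact Real.sqrt_pos.2 (div_pos hx hc)
  refine ((tendsto_lintegral_Ioc_div f a b ha hb hfin hasymp).comp hsqrt).congr' ?_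
  filter_upwards [self_mem_nhdsWithin] with x hx
  have hxc : 0 ≤ x / c := (div_pos hx hc).le
  have hpow : √(x / c) ^ (b + 1) = (x / c) ^ ((b + 1) / 2) := by
    rw [Real.sqrt_eq_rpow, ← Real.rpow_mul hxc]
    congr 1; ring
  simp only [Function.comp_apply]
  rw [measure_mul_sq_le P S hS hS0 f hdens c x hc, hpow]
end

section
/- Let f, g : ℝ → ℝ be measurable, nonnegative, vanishing on (-∞,0], and locally integrable on [0,∞). Let a, c > 0 and α, β > -1 be real numbers with f(x)/(a·x^α) → 1 and g(x)/(c·x^β) → 1 as x → 0⁺. Then the convolution (f⋆g)(s) = ∫_{0}^{s} f(u)·g(s-u) du satisfies (f⋆g)(s) / ( a·c·(Γ(α+1)·Γ(β+1)/Γ(α+β+2))·s^(α+β+1) ) → 1 as s → 0⁺, where Γ denotes the real Gamma function. -/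
open MeasureTheory Topology Filter

/-!
Substituting `u = s t` and writing `Φ x = f x / (a x^α)`, `Ψ x = g x / (c x^β)`, the quotient of
`(f⋆g)(s)` by `a c s^(α+β+1)` becomes
`∫₀¹ Φ(s t) Ψ(s (1 - t)) t^α (1 - t)^β dt` (`convolution_eq_rescaled`).
As `Φ` and `Ψ` tend to `1` at `0⁺`, they are bounded by `2` near `0`, so for small `s` the integrand
is dominated by four times the Beta density `t^α (1 - t)^β`, which is integrable because
`α, β > -1`. Dominated convergence then gives the limit `∫₀¹ t^α (1 - t)^β dt`, which Euler's
formula (`integral_beta_kernel`) identifies with `Γ(α+1) Γ(β+1) / Γ(α+β+2)`.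
-/

lemma integrableOn_beta_kernel {α β : ℝ} (hα : -1 < α) (hβ : -1 < β) :
    IntegrableOn (fun t : ℝ => t ^ α * (1 - t) ^ β) (Set.Ioo 0 1) := by
  have h := Complex.betaIntegral_convergent (u := ((α + 1 : ℝ) : ℂ)) (v := ((β + 1 : ℝ) : ℂ))
    (by rw [Complex.ofReal_re]; linarith) (by rw [Complex.ofReal_re]; linarith)
  rw [intervalIntegrable_iff_integrableOn_Ioo_of_le zero_le_one] at h
  refine IntegrableOn.congr_fun h.re (fun t ht => ?_) measurableSet_Ioo
  have h1 : (0 : ℝ) ≤ 1 - t := by linarith [ht.2]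
  have e1 : ((α + 1 : ℝ) : ℂ) - 1 = (α : ℂ) := by push_cast; ring
  have e2 : ((β + 1 : ℝ) : ℂ) - 1 = (β : ℂ) := by push_cast; ring
  simp only [e1, e2]
  rw [← Complex.ofReal_cpow ht.1.le, ← Complex.ofReal_one, ← Complex.ofReal_sub,
    ← Complex.ofReal_cpow h1, ← Complex.ofReal_mul]
  exact Complex.ofReal_re _

/-- Euler's Beta integral over the reals, deduced from the complex `Complex.betaIntegral`. -/
lemma integral_beta_kernel {α β : ℝ} (hα : -1 < α) (hβ : -1 < β) :
    ∫ t in Set.Ioo (0 : ℝ) 1, t ^ α * (1 - t) ^ β =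
      Real.Gamma (α + 1) * Real.Gamma (β + 1) / Real.Gamma (α + β + 2) := by
  have key : ((∫ t in Set.Ioo (0 : ℝ) 1, t ^ α * (1 - t) ^ β : ℝ) : ℂ) =
      Complex.betaIntegral ((α + 1 : ℝ) : ℂ) ((β + 1 : ℝ) : ℂ) := by
    rw [Complex.betaIntegral, intervalIntegral.integral_of_le zero_le_one,
      integral_Ioc_eq_integral_Ioo, ← integral_complex_ofReal]
    refine setIntegral_congr_fun measurableSet_Ioo (fun t ht => ?_)
    have h1 : (0 : ℝ) ≤ 1 - t := by linarith [ht.2]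
    have e1 : ((α + 1 : ℝ) : ℂ) - 1 = (α : ℂ) := by push_cast; ring
    have e2 : ((β + 1 : ℝ) : ℂ) - 1 = (β : ℂ) := by push_cast; ring
    simp only [e1, e2]
    rw [← Complex.ofReal_cpow ht.1.le, ← Complex.ofReal_one, ← Complex.ofReal_sub,
      ← Complex.ofReal_cpow h1, ← Complex.ofReal_mul]
  have h := ProbabilityTheory.beta_eq_betaIntegralReal (α + 1) (β + 1) (by linarith) (by linarith)
  rw [← key, Complex.ofReal_re] at h
  rw [← h, ProbabilityTheory.beta]
  congr 2
  ring

/-- The substitution `u = s t` in the convolution, with the leading powers factored out. -/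
lemma convolution_eq_rescaled (f g : ℝ → ℝ) {a c α β s : ℝ} (ha : 0 < a) (hc : 0 < c)
    (hs : 0 < s) :
    ∫ u in Set.Ioc (0 : ℝ) s, f u * g (s - u) =
      a * c * s ^ (α + β + 1) * ∫ t in Set.Ioo (0 : ℝ) 1,
        (f (s * t) / (a * (s * t) ^ α)) * (g (s * (1 - t)) / (c * (s * (1 - t)) ^ β)) *
          (t ^ α * (1 - t) ^ β) := by
  have h := intervalIntegral.smul_integral_comp_mul_left (a := 0) (b := 1)
    (fun u => f u * g (s - u)) s
  rw [mul_zero, mul_one, intervalIntegral.integral_of_le hs.le,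
    intervalIntegral.integral_of_le zero_le_one, integral_Ioc_eq_integral_Ioo (y := 1)] at h
  rw [← h, smul_eq_mul, ← integral_const_mul, ← integral_const_mul]
  refine setIntegral_congr_fun measurableSet_Ioo (fun t ht => ?_)
  have ht0 : 0 < t := ht.1
  have ht1 : 0 < 1 - t := by linarith [ht.2]
  have e : s - s * t = s * (1 - t) := by ring
  have p1 := Real.rpow_pos_of_pos hs α
  have p2 := Real.rpow_pos_of_pos hs β
  have p3 := Real.rpow_pos_of_pos ht0 α
  have p4 := Real.rpow_pos_of_pos ht1 β
  simp only [e]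
  rw [Real.mul_rpow hs.le ht0.le, Real.mul_rpow hs.le ht1.le, Real.rpow_add hs, Real.rpow_add hs,
    Real.rpow_one]
  field_simp

theorem stmt_4 (f g : ℝ → ℝ) (hfm : Measurable f) (hgm : Measurable g)
    (hf0 : ∀ x, 0 ≤ f x) (hg0 : ∀ x, 0 ≤ g x)
    (hfneg : ∀ x ≤ (0 : ℝ), f x = 0) (hgneg : ∀ x ≤ (0 : ℝ), g x = 0)
    (hfloc : LocallyIntegrableOn f (Set.Ici 0)) (hgloc : LocallyIntegrableOn g (Set.Ici 0))
    (a c α β : ℝ) (ha : 0 < a) (hc : 0 < c) (hα : -1 < α) (hβ : -1 < β)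
    (hfa : Tendsto (fun x => f x / (a * x ^ α)) (𝓝[>] 0) (𝓝 1))
    (hgc : Tendsto (fun x => g x / (c * x ^ β)) (𝓝[>] 0) (𝓝 1)) :
    Tendsto (fun s => (∫ u in Set.Ioc (0 : ℝ) s, f u * g (s - u)) /
        (a * c * (Real.Gamma (α + 1) * Real.Gamma (β + 1) / Real.Gamma (α + β + 2)) *
          s ^ (α + β + 1))) (𝓝[>] 0) (𝓝 1) := by
  set B := Real.Gamma (α + 1) * Real.Gamma (β + 1) / Real.Gamma (α + β + 2) with hB
  have hBpos : 0 < B := div_pos (mul_pos (Real.Gamma_pos_of_pos (by linarith))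
    (Real.Gamma_pos_of_pos (by linarith))) (Real.Gamma_pos_of_pos (by linarith))
  have scale : ∀ t : ℝ, 0 < t → Tendsto (fun s : ℝ => s * t) (𝓝[>] 0) (𝓝[>] 0) := by
    intro t ht
    refine tendsto_nhdsWithin_iff.2 ⟨?_, ?_⟩
    · have : Tendsto (fun s : ℝ => s * t) (𝓝 0) (𝓝 (0 * t)) := tendsto_id.mul_const t
      rw [zero_mul] at this
      exact this.mono_left nhdsWithin_le_nhds
    · filter_upwards [self_mem_nhdsWithin] with s hs
      exact mul_pos hs ht
  have bdd : ∀ φ : ℝ → ℝ, Tendsto φ (𝓝[>] 0) (𝓝 1) →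
      ∃ δ > 0, ∀ x, 0 < x → x < δ → |φ x| ≤ 2 := by
    intro φ hφ
    have h : ∀ᶠ x in 𝓝[>] 0, |φ x| ≤ 2 :=
      hφ.abs.eventually_le_const (by norm_num)
    obtain ⟨δ, hδ, h⟩ := mem_nhdsGT_iff_exists_Ioo_subset.1 h
    exact ⟨δ, hδ, fun x h0 h1 => h ⟨h0, h1⟩⟩
  obtain ⟨δ₁, hδ₁, hb₁⟩ := bdd _ hfa
  obtain ⟨δ₂, hδ₂, hb₂⟩ := bdd _ hgc
  have lim : Tendsto (fun s : ℝ => ∫ t in Set.Ioo (0 : ℝ) 1,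
        (f (s * t) / (a * (s * t) ^ α)) * (g (s * (1 - t)) / (c * (s * (1 - t)) ^ β)) *
          (t ^ α * (1 - t) ^ β)) (𝓝[>] 0) (𝓝 B) := by
    rw [hB, ← integral_beta_kernel hα hβ]
    refine tendsto_integral_filter_of_dominated_convergence
      (fun t => 2 * 2 * (t ^ α * (1 - t) ^ β)) ?_ ?_
      ((integrableOn_beta_kernel hα hβ).const_mul _) ?_
    · refine Eventually.of_forall fun s => Measurable.aestronglyMeasurable ?_
      fun_prop
    · filter_upwards [Ioo_mem_nhdsGT hδ₁, Ioo_mem_nhdsGT hδ₂] with s hs₁ hs₂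
      refine ae_restrict_of_forall_mem measurableSet_Ioo fun t ht => ?_
      have ht1 : 0 < 1 - t := by linarith [ht.2]
      have hw : 0 ≤ t ^ α * (1 - t) ^ β :=
        mul_nonneg (Real.rpow_nonneg ht.1.le _) (Real.rpow_nonneg ht1.le _)
      rw [Real.norm_eq_abs, abs_mul, abs_mul, abs_of_nonneg hw]
      gcongr
      · exact hb₁ _ (mul_pos hs₁.1 ht.1) (by nlinarith [hs₁.1, hs₁.2, ht.2])
      · exact hb₂ _ (mul_pos hs₂.1 ht1) (by nlinarith [hs₂.1, hs₂.2, ht.1])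
    · refine ae_restrict_of_forall_mem measurableSet_Ioo fun t ht => ?_
      have ht1 : 0 < 1 - t := by linarith [ht.2]
      have := ((hfa.comp (scale t ht.1)).mul (hgc.comp (scale _ ht1))).mul_const
        (t ^ α * (1 - t) ^ β)
      simpa only [mul_one, one_mul, Function.comp_apply] using this
  have lim' := lim.div_const B
  rw [div_self hBpos.ne'] at lim'
  refine lim'.congr' ?_
  filter_upwards [self_mem_nhdsWithin] with s hs
  have hs : 0 < s := hs
  have := Real.rpow_pos_of_pos hs (α + β + 1)
  rw [convolution_eq_rescaled f g (α := α) (β := β) ha hc hs]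
  rw [mul_right_comm (a * c) B, mul_div_mul_left _ _ (by positivity)]
end

section
/- Let N ≥ 1 and let f_1, …, f_N : ℝ → ℝ be measurable, nonnegative, vanishing on (-∞,0], and locally integrable on [0,∞). Let a_n > 0 and b_n > -1 be real numbers with f_n(x)/(a_n·x^(b_n)) → 1 as x → 0⁺ for each n. Let F denote the N-fold convolution f_1 ⋆ f_2 ⋆ ⋯ ⋆ f_N, where (f⋆g)(s) = ∫_{0}^{s} f(u)·g(s-u) du. Then F(s) / ( ( (∏_{n=1}^{N} a_n·Γ(b_n+1)) / Γ(∑_{n=1}^{N}(b_n+1)) )·s^{∑_{n=1}^{N}(b_n+1) - 1} ) → 1 as s → 0⁺, where Γ denotes the real Gamma function. (This gives the asymptotic linear coefficient a_0 = (∏ a_n Γ(b_n+1))/Γ(∑(b_n+1)) and angular coefficient b_0 = ∑ b_n + N - 1 of the PDF of a sum of independent nonnegative random variables.) -/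
/-! The `N`-fold asymptotics follow by induction from the case of two factors. If
`f x / x ^ α → A` and `g x / x ^ β → B` as `x → 0⁺`, the substitution `u = s t` gives
`(f ⋆ g)(s) / s ^ (α + β + 1) = ∫₀¹ φ (s t) ψ (s (1 - t)) t ^ α (1 - t) ^ β dt`
with `φ x = f x / x ^ α` and `ψ x = g x / x ^ β`. Both `φ` and `ψ` are bounded near `0⁺`, so a
multiple of the Beta density dominates the integrand for small `s`, and dominated convergence
(`tendsto_conv_div`) yields the limit `A B Γ(α + 1) Γ(β + 1) / Γ(α + β + 2)`. Along the induction the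
Gamma factor of the partial sum of exponents cancels. -/

open MeasureTheory Topology Filter

/-- One-sided convolution of two functions supported on `[0,∞)`. -/
noncomputable def conv (f g : ℝ → ℝ) : ℝ → ℝ :=
  fun s => ∫ u in Set.Ioc (0 : ℝ) s, f u * g (s - u)

/-- The `N`-fold convolution `f 0 ⋆ f 1 ⋆ ⋯ ⋆ f N` (with `N + 1` factors). -/
noncomputable def multiConv : (N : ℕ) → (Fin (N + 1) → ℝ → ℝ) → ℝ → ℝ
  | 0, f => f 0
  | (N + 1), f => conv (f 0) (multiConv N (fun i => f i.succ))

/-- Convergence of the real Beta integral and its value in terms of `Gamma`. -/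
lemma beta_integrand_facts {α β : ℝ} (hα : -1 < α) (hβ : -1 < β) :
    IntervalIntegrable (fun t : ℝ => t ^ α * (1 - t) ^ β) volume 0 1 ∧
      ∫ t in (0 : ℝ)..1, t ^ α * (1 - t) ^ β =
        Real.Gamma (α + 1) * Real.Gamma (β + 1) / Real.Gamma (α + 1 + (β + 1)) := by
  have hα' : 0 < α + 1 := by linarith
  have hβ' : 0 < β + 1 := by linarith
  have hc : IntervalIntegrable (fun x : ℝ => (x : ℂ) ^ (((α + 1 : ℝ) : ℂ) - 1) *
      (1 - (x : ℂ)) ^ (((β + 1 : ℝ) : ℂ) - 1)) volume 0 1 :=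
    Complex.betaIntegral_convergent (by rwa [Complex.ofReal_re]) (by rwa [Complex.ofReal_re])
  have hcongr : ∀ x ∈ Set.uIcc (0 : ℝ) 1, (x : ℂ) ^ (((α + 1 : ℝ) : ℂ) - 1) *
      (1 - (x : ℂ)) ^ (((β + 1 : ℝ) : ℂ) - 1) = ((x ^ α * (1 - x) ^ β : ℝ) : ℂ) := by
    intro x hx
    rw [Set.uIcc_of_le zero_le_one] at hx
    rw [Complex.ofReal_mul, Complex.ofReal_cpow hx.1, Complex.ofReal_cpow (by linarith [hx.2])]
    push_cast
    simp
  have hc' : IntervalIntegrable (fun x : ℝ => ((x ^ α * (1 - x) ^ β : ℝ) : ℂ)) volume 0 1 :=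
    hc.congr fun x hx => hcongr x (Set.uIoc_subset_uIcc hx)
  refine ⟨?_, ?_⟩
  · rw [intervalIntegrable_iff] at hc' ⊢
    have h := Integrable.re hc'
    simp only [RCLike.re_eq_complex_re, Complex.ofReal_re] at h
    exact h
  · have h := ProbabilityTheory.beta_eq_betaIntegralReal _ _ hα' hβ'
    rw [Complex.betaIntegral, intervalIntegral.integral_congr hcongr,
      intervalIntegral.integral_ofReal, Complex.ofReal_re] at h
    rw [← h, ProbabilityTheory.beta]

lemma measurable_conv {f g : ℝ → ℝ} (hf : Measurable f) (hg : Measurable g) :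
    Measurable (conv f g) := by
  have h1 : conv f g = fun s => ∫ u, ({p : ℝ × ℝ | 0 < p.2 ∧ p.2 ≤ p.1}.indicator
      (fun p => f p.2 * g (p.1 - p.2))) (s, u) := by
    funext s
    rw [conv, ← integral_indicator measurableSet_Ioc]
    rfl
  have hS : MeasurableSet {p : ℝ × ℝ | 0 < p.2 ∧ p.2 ≤ p.1} :=
    (measurableSet_lt measurable_const measurable_snd).inter
      (measurableSet_le measurable_snd measurable_fst)
  rw [h1]
  exact (StronglyMeasurable.integral_prod_right'
    (Measurable.indicator (by fun_prop) hS).stronglyMeasurable).measurable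

/-- A function with a finite limit at `0⁺` is bounded on some interval `(0, δ)`. -/
lemma exists_bound_of_tendsto {φ : ℝ → ℝ} {A : ℝ} (h : Tendsto φ (𝓝[>] 0) (𝓝 A)) :
    ∃ δ > 0, ∀ x, 0 < x → x < δ → |φ x| ≤ |A| + 1 := by
  have h1 : ∀ᶠ x in 𝓝[>] (0 : ℝ), |φ x| < |A| + 1 :=
    h.abs.eventually_lt_const (by linarith)
  obtain ⟨δ, hδ, hs⟩ := mem_nhdsGT_iff_exists_Ioo_subset.1 h1
  exact ⟨δ, hδ, fun x h0 hx => (hs ⟨h0, hx⟩ : |φ x| < |A| + 1).le⟩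

/-- The substitution `u = s t`, which moves the convolution integral to the fixed interval
`(0, 1)`. -/
lemma conv_div_eq (f g : ℝ → ℝ) (α β : ℝ) {s : ℝ} (hs : 0 < s) :
    conv f g s / s ^ (α + β + 1) = ∫ t in (0 : ℝ)..1,
      (f (s * t) / (s * t) ^ α) * (g (s * (1 - t)) / (s * (1 - t)) ^ β) *
        (t ^ α * (1 - t) ^ β) := by
  have h := intervalIntegral.smul_integral_comp_mul_left (a := 0) (b := 1)
    (fun u => f u * g (s - u)) s
  rw [mul_zero, mul_one, smul_eq_mul, intervalIntegral.integral_of_le hs.le] at h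
  rw [conv, ← h, mul_div_right_comm, ← intervalIntegral.integral_const_mul,
    intervalIntegral.integral_of_le zero_le_one, intervalIntegral.integral_of_le zero_le_one,
    integral_Ioc_eq_integral_Ioo, integral_Ioc_eq_integral_Ioo]
  refine setIntegral_congr_fun measurableSet_Ioo fun t ht => ?_
  have ht0 : 0 < t := ht.1
  have ht1 : 0 < 1 - t := by linarith [ht.2]
  have e1 : s ^ (α + β + 1) = s ^ α * s ^ β * s := by
    rw [Real.rpow_add hs, Real.rpow_add hs, Real.rpow_one]
  have hsα := (Real.rpow_pos_of_pos hs α).ne'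
  have hsβ := (Real.rpow_pos_of_pos hs β).ne'
  have htα := (Real.rpow_pos_of_pos ht0 α).ne'
  have htβ := (Real.rpow_pos_of_pos ht1 β).ne'
  rw [e1, Real.mul_rpow hs.le ht0.le, Real.mul_rpow hs.le ht1.le,
    show s - s * t = s * (1 - t) by ring]
  field_simp

/-- The case of two factors. -/
lemma tendsto_conv_div {f g : ℝ → ℝ} (hf : Measurable f) (hg : Measurable g) {α β A B : ℝ}
    (hα : -1 < α) (hβ : -1 < β)
    (hfA : Tendsto (fun x => f x / x ^ α) (𝓝[>] 0) (𝓝 A))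
    (hgB : Tendsto (fun x => g x / x ^ β) (𝓝[>] 0) (𝓝 B)) :
    Tendsto (fun s => conv f g s / s ^ (α + β + 1)) (𝓝[>] 0)
      (𝓝 (A * B * (Real.Gamma (α + 1) * Real.Gamma (β + 1) /
        Real.Gamma (α + 1 + (β + 1))))) := by
  obtain ⟨hint, hval⟩ := beta_integrand_facts hα hβ
  obtain ⟨δ₁, hδ₁, hb₁⟩ := exists_bound_of_tendsto hfA
  obtain ⟨δ₂, hδ₂, hb₂⟩ := exists_bound_of_tendsto hgB
  have hscale : ∀ c : ℝ, 0 < c → Tendsto (fun s : ℝ => s * c) (𝓝[>] 0) (𝓝[>] 0) := by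
    intro c hc
    refine tendsto_nhdsWithin_iff.2 ⟨?_, ?_⟩
    · have : Tendsto (fun s : ℝ => s * c) (𝓝 0) (𝓝 (0 * c)) :=
        (continuous_id.mul continuous_const).tendsto 0
      rw [zero_mul] at this
      exact this.mono_left nhdsWithin_le_nhds
    · filter_upwards [self_mem_nhdsWithin] with s hs
      exact mul_pos hs hc
  -- The endpoint `t = 1` has to be discarded: no bound on `g (s * 0) / (s * 0) ^ β` is available.
  have hne : ∀ᵐ t : ℝ, t ≠ 1 := by simp [ae_iff]
  rw [← hval, ← intervalIntegral.integral_const_mul]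
  have heq := (eventually_mem_nhdsWithin (a := (0 : ℝ)) (s := Set.Ioi 0)).mono
    fun s hs => (conv_div_eq f g α β hs).symm
  refine Tendsto.congr' heq ?_
  refine intervalIntegral.tendsto_integral_filter_of_dominated_convergence
    (fun t => (|A| + 1) * (|B| + 1) * (t ^ α * (1 - t) ^ β)) ?_ ?_ (hint.const_mul _) ?_
  · exact Eventually.of_forall fun s => Measurable.aestronglyMeasurable (by fun_prop)
  · filter_upwards [Ioo_mem_nhdsGT hδ₁, Ioo_mem_nhdsGT hδ₂] with s hs₁ hs₂
    filter_upwards [hne] with t ht1 ht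
    rw [Set.uIoc_of_le zero_le_one] at ht
    have h0 : 0 < t := ht.1
    have hlt : t < 1 := lt_of_le_of_ne ht.2 ht1
    have h1 : 0 < 1 - t := by linarith
    have hs0 : 0 < s := hs₁.1
    have hw : 0 ≤ t ^ α * (1 - t) ^ β := by positivity
    rw [Real.norm_eq_abs, abs_mul, abs_mul, abs_of_nonneg hw]
    gcongr
    · exact hb₁ _ (mul_pos hs0 h0) (by nlinarith [hs₁.2])
    · exact hb₂ _ (mul_pos hs0 h1) (by nlinarith [hs₂.2])
  · filter_upwards [hne] with t ht1 ht
    rw [Set.uIoc_of_le zero_le_one] at ht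
    have hlt : t < 1 := lt_of_le_of_ne ht.2 ht1
    exact ((hfA.comp (hscale t ht.1)).mul (hgB.comp (hscale (1 - t) (by linarith)))).mul_const _

lemma measurable_multiConv (N : ℕ) (f : Fin (N + 1) → ℝ → ℝ) (hf : ∀ n, Measurable (f n)) :
    Measurable (multiConv N f) := by
  induction N with
  | zero => exact hf 0
  | succ N ih => exact measurable_conv (hf 0) (ih _ fun i => hf i.succ)

lemma sum_add_one_pos {N : ℕ} {b : Fin (N + 1) → ℝ} (hb : ∀ n, -1 < b n) :
    0 < ∑ n, (b n + 1) :=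
  Finset.sum_pos (fun n _ => by linarith [hb n]) Finset.univ_nonempty

/-- The asymptotics with the constant in the limit rather than in the denominator; the constants
`a n` may then have any sign. -/
lemma tendsto_multiConv_div (N : ℕ) (f : Fin (N + 1) → ℝ → ℝ) (hf : ∀ n, Measurable (f n))
    (a b : Fin (N + 1) → ℝ) (hb : ∀ n, -1 < b n)
    (h : ∀ n, Tendsto (fun x => f n x / x ^ b n) (𝓝[>] 0) (𝓝 (a n))) :
    Tendsto (fun s => multiConv N f s / s ^ ((∑ n, (b n + 1)) - 1)) (𝓝[>] 0)
      (𝓝 ((∏ n, a n * Real.Gamma (b n + 1)) / Real.Gamma (∑ n, (b n + 1)))) := by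
  induction N with
  | zero =>
    have hΓ : Real.Gamma (b 0 + 1) ≠ 0 := (Real.Gamma_pos_of_pos (by linarith [hb 0])).ne'
    simpa [multiConv, hΓ] using h 0
  | succ N ih =>
    have hS := sum_add_one_pos fun i : Fin (N + 1) => hb i.succ
    have key := tendsto_conv_div (hf 0)
      (measurable_multiConv N (fun i => f i.succ) fun i => hf i.succ) (hb 0)
      (by linarith) (h 0)
      (ih (fun i => f i.succ) (fun i => hf i.succ) (fun i => a i.succ) (fun i => b i.succ)
        (fun i => hb i.succ) fun i => h i.succ)
    have hΓ := (Real.Gamma_pos_of_pos hS).ne'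
    rw [Fin.sum_univ_succ, Fin.prod_univ_succ]
    rw [sub_add_cancel] at key
    convert key using 2
    · rw [multiConv]
      congr 2
      ring
    · field_simp

/-- Asymptotics near `0⁺` of the `N`-fold convolution of nonnegative functions
supported on `[0,∞)` satisfying `f n (x) ∼ a n · x ^ (b n)` as `x → 0⁺`:
the convolution is asymptotically
`((∏ a n Γ(b n + 1))/Γ(∑ (b n + 1))) · s ^ (∑ (b n + 1) - 1)`. -/
theorem stmt_5 (N : ℕ) (f : Fin (N + 1) → ℝ → ℝ)
    (hfm : ∀ n, Measurable (f n)) (hf0 : ∀ n x, 0 ≤ f n x)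
    (hfneg : ∀ n, ∀ x ≤ (0 : ℝ), f n x = 0)
    (hfloc : ∀ n, LocallyIntegrableOn (f n) (Set.Ici 0))
    (a b : Fin (N + 1) → ℝ) (ha : ∀ n, 0 < a n) (hb : ∀ n, -1 < b n)
    (hasymp : ∀ n, Tendsto (fun x => f n x / (a n * x ^ b n)) (𝓝[>] 0) (𝓝 1)) :
    Tendsto (fun s => multiConv N f s /
        (((∏ n, a n * Real.Gamma (b n + 1)) / Real.Gamma (∑ n, (b n + 1))) *
          s ^ ((∑ n, (b n + 1)) - 1))) (𝓝[>] 0) (𝓝 1) := by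
  have h : ∀ n, Tendsto (fun x => f n x / x ^ b n) (𝓝[>] 0) (𝓝 (a n)) := by
    intro n
    have h1 := (hasymp n).const_mul (a n)
    rw [mul_one] at h1
    refine h1.congr fun x => ?_
    rw [← mul_div_assoc, mul_div_mul_left _ _ (ha n).ne']
  have hC : 0 < (∏ n, a n * Real.Gamma (b n + 1)) / Real.Gamma (∑ n, (b n + 1)) :=
    div_pos (Finset.prod_pos fun n _ => mul_pos (ha n)
      (Real.Gamma_pos_of_pos (by linarith [hb n]))) (Real.Gamma_pos_of_pos (sum_add_one_pos hb))
  have h2 := (tendsto_multiConv_div N f hfm a b hb h).div_const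
    ((∏ n, a n * Real.Gamma (b n + 1)) / Real.Gamma (∑ n, (b n + 1)))
  rw [div_self hC.ne'] at h2
  refine h2.congr fun s => ?_
  rw [div_div, mul_comm]
end

section
/- Let N ≥ 1, let M > 0 be real, and let x : Fin N → ℝ satisfy x_n ≥ 0 for all n and ∑_{n} x_n < 1. Then the family over multi-indices i : Fin N → ℕ given by i ↦ Γ(M + ∑_n i_n) / (Γ(M)·∏_n i_n!) · ∏_n x_n^{i_n} is summable, and its sum equals (1 - ∑_n x_n)^(-M), where Γ denotes the real Gamma function. -/
/-!
The multi-indices are grouped by their total degree `k = |i|`. On the finite set of those of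
degree `k` the coefficient is `Γ(M + k) / (Γ(M) k!)` times the multinomial coefficient, so the
multinomial theorem (`Finset.sum_pow_eq_sum_piAntidiag`) collapses that part of the family to
`Γ(M + k) / (Γ(M) k!) * (∑ x_n) ^ k`. What remains is the one-variable binomial series for
`(1 - s) ^ (-M)` at `s = ∑ x_n`. All terms are nonnegative, so summability over the degrees lifts
to summability of the whole family, and the sums agree.
-/

open Finset

/-- The rising factorial of `M` as a quotient of Gamma values. -/
lemma Gamma_add_nat_eq_ascPochhammer {M : ℝ} (hM : 0 < M) (k : ℕ) :
    Real.Gamma (M + k) = (ascPochhammer ℝ k).eval M * Real.Gamma M := by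
  induction k with
  | zero => simp
  | succ k ih =>
    have h : M + (k : ℝ) ≠ 0 := by positivity
    rw [Nat.cast_succ, ← add_assoc, Real.Gamma_add_one h, ih, ascPochhammer_succ_right]
    simp
    ring

/-- The coefficients of the power series of `(1 - s) ^ (-M)` in terms of Gamma values. -/
lemma ring_choose_eq_Gamma {M : ℝ} (hM : 0 < M) (k : ℕ) :
    Ring.choose (M + k - 1) k = Real.Gamma (M + k) / (Real.Gamma M * (k.factorial : ℝ)) := by
  have h1 := Ring.factorial_nsmul_multichoose_eq_ascPochhammer M k
  rw [Ring.multichoose_eq, Polynomial.ascPochhammer_smeval_eq_eval, nsmul_eq_mul] at h1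
  have hG := (Real.Gamma_pos_of_pos hM).ne'
  have hk : (k.factorial : ℝ) ≠ 0 := by positivity
  rw [Gamma_add_nat_eq_ascPochhammer hM, ← h1]
  field_simp

/-- The one-variable case: the binomial series with exponent `-M`. -/
lemma hasSum_Gamma_mul_pow {M s : ℝ} (hM : 0 < M) (h0 : 0 ≤ s) (h1 : s < 1) :
    HasSum (fun k : ℕ => Real.Gamma (M + k) / (Real.Gamma M * (k.factorial : ℝ)) * s ^ k)
      ((1 - s) ^ (-M)) := by
  have h := (Real.one_div_one_sub_rpow_hasFPowerSeriesOnBall_zero M).hasSum (y := s)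
    (by
      have h2 : ‖s‖₊ < 1 := by
        rw [← NNReal.coe_lt_coe]
        simpa [abs_of_nonneg h0] using h1
      simpa [enorm_eq_nnnorm] using h2)
  rw [Real.rpow_neg (by linarith)]
  simpa [FormalMultilinearSeries.ofScalars_apply_eq, ring_choose_eq_Gamma hM, mul_comm] using h

/-- Summing the terms of total degree `k`, by the multinomial theorem. -/
lemma sum_piAntidiag_Gamma (N : ℕ) (M : ℝ) (x : Fin N → ℝ) (k : ℕ) :
    ∑ i ∈ piAntidiag (univ : Finset (Fin N)) k,
      Real.Gamma (M + ∑ n, (i n : ℝ)) / (Real.Gamma M * ∏ n, ((i n).factorial : ℝ)) *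
        ∏ n, x n ^ i n =
      Real.Gamma (M + k) / (Real.Gamma M * (k.factorial : ℝ)) * (∑ n, x n) ^ k := by
  rw [sum_pow_eq_sum_piAntidiag, mul_sum]
  refine sum_congr rfl fun i hi => ?_
  have hi' : ∑ n, i n = k := (mem_piAntidiag.1 hi).1
  have hc : (∑ n, (i n : ℝ)) = k := by exact_mod_cast hi'
  have hm : (∏ n, ((i n).factorial : ℝ)) * (Nat.multinomial univ i : ℝ) = k.factorial := by
    have := Nat.multinomial_spec univ i
    rw [hi'] at this
    exact_mod_cast this
  have hp : (∏ n, ((i n).factorial : ℝ)) ≠ 0 := by positivity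
  have hq : (Nat.multinomial univ i : ℝ) ≠ 0 := by
    exact_mod_cast (Nat.multinomial_pos univ i).ne'
  rw [hc, ← hm]
  field_simp

/-- Multivariate negative-binomial series: for `x n ≥ 0` with `∑ x n < 1` and `M > 0`,
the family `i ↦ Γ(M + |i|)/(Γ(M)·∏ i_n!) · ∏ x_n^{i_n}` over multi-indices
`i : Fin N → ℕ` is summable with sum `(1 - ∑ x n)^(-M)`. -/
theorem stmt_6 (N : ℕ) (hN : 1 ≤ N) (M : ℝ) (hM : 0 < M)
    (x : Fin N → ℝ) (hx : ∀ n, 0 ≤ x n) (hsum : ∑ n, x n < 1) :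
    Summable (fun i : Fin N → ℕ =>
      Real.Gamma (M + ∑ n, (i n : ℝ)) / (Real.Gamma M * ∏ n, ((i n).factorial : ℝ)) *
        ∏ n, x n ^ i n) ∧
    (∑' i : Fin N → ℕ,
      Real.Gamma (M + ∑ n, (i n : ℝ)) / (Real.Gamma M * ∏ n, ((i n).factorial : ℝ)) *
        ∏ n, x n ^ i n) = (1 - ∑ n, x n) ^ (-M) := by
  set f : (Fin N → ℕ) → ℝ := fun i =>
    Real.Gamma (M + ∑ n, (i n : ℝ)) / (Real.Gamma M * ∏ n, ((i n).factorial : ℝ)) *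
      ∏ n, x n ^ i n with hf
  let g : (Fin N → ℕ) → ℕ := fun i => ∑ n, i n
  have hnonneg : 0 ≤ f := fun i => by
    have h1 : 0 < Real.Gamma (M + ∑ n, (i n : ℝ)) := Real.Gamma_pos_of_pos (by positivity)
    have h2 := Real.Gamma_pos_of_pos hM
    have h3 : 0 ≤ ∏ n, x n ^ i n := prod_nonneg fun n _ => pow_nonneg (hx n) _
    simp only [hf, Pi.zero_apply]
    positivity
  have hset (k : ℕ) : g ⁻¹' {k} = ↑(piAntidiag (univ : Finset (Fin N)) k) := by
    ext i
    simp [g]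
  have hfiber (k : ℕ) : ∑' i : g ⁻¹' {k}, f i =
      Real.Gamma (M + k) / (Real.Gamma M * (k.factorial : ℝ)) * (∑ n, x n) ^ k := by
    rw [hset, ← sum_piAntidiag_Gamma]
    exact Finset.tsum_subtype _ f
  have hone := hasSum_Gamma_mul_pow hM (sum_nonneg fun n _ => hx n) hsum
  have hS : Summable f := by
    refine (summable_partition hnonneg (s := fun k => g ⁻¹' {k}) fun i => ?_).2 ⟨fun k => ?_, ?_⟩
    · exact ⟨g i, rfl, fun k hk => hk.symm⟩
    · rw [hset]
      exact Finset.summable _ f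
    · simpa only [hfiber] using hone.summable
  refine ⟨hS, ?_⟩
  have h := hS.hasSum.tsum_fiberwise g
  simp only [hfiber] at h
  exact h.unique hone
end

section
/- Let N ≥ 1 and let α, M be real numbers with 0 < α ≤ M. Let y : Fin N → ℝ satisfy y_n ≥ 0 for all n, and let D be a real number with D > ∑_n y_n and D > 0. Then the family over multi-indices i : Fin N → ℕ given by i ↦ Γ(M + ∑_n i_n) · D^(-∑_n i_n) · ∏_n ( Γ(i_n + α)·y_n^{i_n} / (Γ(i_n + M)·i_n!) ) is summable, where Γ denotes the real Gamma function. (With α = |m₁ - m₂|, M = max(m₁,m₂), y_n = (σ_{r,n}λ_{r,n}/δ_{r,n})² and D = 2 + ∑_l λ_{r,l}²σ_{r,l}²/δ_{r,l}², this establishes convergence of the N-fold series defining the asymptotic linear coefficient a₀ of the RIS SNR distribution.) -/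
/-!
The ratio `Γ(k + α) / Γ(k + M)` is nonincreasing in `k ∈ ℕ` when `0 < α ≤ M`, so it is at most
`Γ(α) / Γ(M)`. With `z n = y n / D` and `S = ∑ z n < 1`, the family is therefore dominated by a
constant multiple of `Γ(M + |i|) ∏ z n ^ i n / (i n)!`. Inserting Euler's integral for `Γ(M + |i|)`,
every finite partial sum of the latter is bounded by
`∫ exp (-t) t ^ (M - 1) exp (S t) dt` over `t > 0`, because
`∑ ∏ (t z n) ^ i n / (i n)! ≤ exp (S t)`; this integral converges since `S < 1`, and a nonnegative
family with bounded partial sums is summable.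
-/

open Finset

lemma gamma_ratio_le (α M : ℝ) (hα : 0 < α) (hαM : α ≤ M) (k : ℕ) :
    Real.Gamma (k + α) / Real.Gamma (k + M) ≤ Real.Gamma α / Real.Gamma M := by
  have hM : 0 < M := hα.trans_le hαM
  induction k with
  | zero => simp
  | succ k ih =>
    have hkα : 0 < (k : ℝ) + α := by positivity
    have hkM : 0 < (k : ℝ) + M := by positivity
    have e1 : ((k + 1 : ℕ) : ℝ) + α = (k + α) + 1 := by push_cast; ring
    have e2 : ((k + 1 : ℕ) : ℝ) + M = (k + M) + 1 := by push_cast; ring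
    rw [e1, e2, Real.Gamma_add_one hkα.ne', Real.Gamma_add_one hkM.ne', mul_div_mul_comm]
    have h0 : 0 ≤ Real.Gamma (k + α) / Real.Gamma (k + M) :=
      (div_pos (Real.Gamma_pos_of_pos hkα) (Real.Gamma_pos_of_pos hkM)).le
    have h1 : ((k : ℝ) + α) / (k + M) ≤ 1 := (div_le_one hkM).2 (by linarith)
    exact (mul_le_of_le_one_left h0 h1).trans ih

/-- Partial sums of the multivariate exponential series are at most its value. -/
lemma sum_prod_pow_div_factorial_le_exp {N : ℕ} (x : Fin N → ℝ) (hx : ∀ n, 0 ≤ x n)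
    (u : Finset (Fin N → ℕ)) :
    ∑ i ∈ u, ∏ n, (x n ^ i n / ((i n).factorial : ℝ)) ≤ Real.exp (∑ n, x n) := by
  -- the finite set `u` lies in a box `{0, …, K} ^ N`, over which the sum factorises
  let K : ℕ := u.sup fun i => ∑ n, i n
  have hsub : u ⊆ Fintype.piFinset (fun _ : Fin N => range (K + 1)) := by
    intro i hi
    rw [Fintype.mem_piFinset]
    intro n
    rw [mem_range, Nat.lt_succ_iff]
    exact (single_le_sum (f := i) (fun _ _ => Nat.zero_le _) (mem_univ n)).trans
      (le_sup (f := fun i : Fin N → ℕ => ∑ n, i n) hi)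
  have hterm (n : Fin N) (k : ℕ) : 0 ≤ x n ^ k / (k.factorial : ℝ) := by
    have := hx n
    positivity
  calc ∑ i ∈ u, ∏ n, (x n ^ i n / ((i n).factorial : ℝ))
      ≤ ∑ i ∈ Fintype.piFinset (fun _ : Fin N => range (K + 1)),
          ∏ n, (x n ^ i n / ((i n).factorial : ℝ)) :=
        sum_le_sum_of_subset_of_nonneg hsub fun i _ _ => prod_nonneg fun n _ => hterm n _
    _ = ∏ n, ∑ k ∈ range (K + 1), x n ^ k / (k.factorial : ℝ) :=
        (prod_univ_sum (fun _ : Fin N => range (K + 1))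
          fun n k => x n ^ k / (k.factorial : ℝ)).symm
    _ ≤ ∏ n, Real.exp (x n) :=
        prod_le_prod (fun n _ => sum_nonneg fun k _ => hterm n k)
          fun n _ => Real.sum_le_exp_of_nonneg (hx n) _
    _ = Real.exp (∑ n, x n) := (Real.exp_sum _ _).symm

/-- Multivariate negative binomial series: convergence on the simplex `∑ z n < 1`. -/
lemma summable_gamma_mul_prod {N : ℕ} (M : ℝ) (hM : 0 < M) (z : Fin N → ℝ)
    (hz : ∀ n, 0 ≤ z n) (hS : ∑ n, z n < 1) :
    Summable (fun i : Fin N → ℕ =>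
      Real.Gamma (M + ∑ n, (i n : ℝ)) * ∏ n, (z n ^ i n / ((i n).factorial : ℝ))) := by
  have hpos (i : Fin N → ℕ) : 0 < M + ∑ n, (i n : ℝ) := by positivity
  have hprod (i : Fin N → ℕ) : 0 ≤ ∏ n, (z n ^ i n / ((i n).factorial : ℝ)) :=
    prod_nonneg fun n _ => div_nonneg (pow_nonneg (hz n) _) (Nat.cast_nonneg _)
  have hint : MeasureTheory.IntegrableOn
      (fun t : ℝ => t ^ (M - 1) * Real.exp (-(1 - ∑ n, z n) * t)) (Set.Ioi 0) := by
    have := integrableOn_rpow_mul_exp_neg_mul_rpow (s := M - 1) (p := 1)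
      (b := 1 - ∑ n, z n) (by linarith) one_pos (by linarith)
    simpa using this
  refine summable_of_sum_le
    (c := ∫ t in Set.Ioi (0 : ℝ), t ^ (M - 1) * Real.exp (-(1 - ∑ n, z n) * t))
    (fun i => mul_nonneg (Real.Gamma_pos_of_pos (hpos i)).le (hprod i)) fun u => ?_
  have hi (i : Fin N → ℕ) : MeasureTheory.IntegrableOn (fun t : ℝ =>
      Real.exp (-t) * t ^ (M + ∑ n, (i n : ℝ) - 1) *
        ∏ n, (z n ^ i n / ((i n).factorial : ℝ))) (Set.Ioi 0) :=
    (Real.GammaIntegral_convergent (hpos i)).mul_const _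
  have hsum : ∑ i ∈ u, Real.Gamma (M + ∑ n, (i n : ℝ)) *
      ∏ n, (z n ^ i n / ((i n).factorial : ℝ)) =
      ∫ t in Set.Ioi (0 : ℝ), ∑ i ∈ u, Real.exp (-t) * t ^ (M + ∑ n, (i n : ℝ) - 1) *
        ∏ n, (z n ^ i n / ((i n).factorial : ℝ)) := by
    rw [MeasureTheory.integral_finsetSum u fun i _ => hi i]
    refine sum_congr rfl fun i _ => ?_
    rw [MeasureTheory.integral_mul_const, Real.Gamma_eq_integral (hpos i)]
  rw [hsum]
  refine MeasureTheory.setIntegral_mono_on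
    (MeasureTheory.integrable_finsetSum u fun i _ => hi i) hint measurableSet_Ioi fun t ht => ?_
  have ht0 : 0 < t := ht
  have hterm (i : Fin N → ℕ) : Real.exp (-t) * t ^ (M + ∑ n, (i n : ℝ) - 1) *
      ∏ n, (z n ^ i n / ((i n).factorial : ℝ)) =
      Real.exp (-t) * t ^ (M - 1) * ∏ n, ((t * z n) ^ i n / ((i n).factorial : ℝ)) := by
    have e1 : M + ∑ n, (i n : ℝ) - 1 = (M - 1) + ((∑ n, i n : ℕ) : ℝ) := by
      push_cast; ring
    have e2 : ∏ n, ((t * z n) ^ i n / ((i n).factorial : ℝ)) =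
        t ^ (∑ n, i n) * ∏ n, (z n ^ i n / ((i n).factorial : ℝ)) := by
      rw [← prod_pow_eq_pow_sum, ← prod_mul_distrib]
      exact prod_congr rfl fun n _ => by rw [mul_pow, mul_div_assoc]
    rw [e1, Real.rpow_add ht0, Real.rpow_natCast, e2]
    ring
  simp only [hterm]
  rw [← mul_sum]
  calc _ ≤ Real.exp (-t) * t ^ (M - 1) * Real.exp (∑ n, t * z n) :=
        mul_le_mul_of_nonneg_left
          (sum_prod_pow_div_factorial_le_exp _ (fun n => mul_nonneg ht0.le (hz n)) u)
          (by positivity)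
    _ = t ^ (M - 1) * (Real.exp (-t) * Real.exp (∑ n, t * z n)) := by ring
    _ = _ := by
        rw [← Real.exp_add, ← mul_sum]
        congr 2
        ring

/-- Convergence of the `N`-fold series defining the asymptotic linear coefficient
`a₀` of the RIS SNR distribution: for `0 < α ≤ M`, `y n ≥ 0`, and `D > ∑ y n`,
`D > 0`, the family
`i ↦ Γ(M + |i|)·D^(-|i|)·∏ (Γ(i_n + α)·y_n^{i_n}/(Γ(i_n + M)·i_n!))` is summable. -/
theorem stmt_7 (N : ℕ) (hN : 1 ≤ N) (α M : ℝ) (hα : 0 < α) (hαM : α ≤ M)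
    (y : Fin N → ℝ) (hy : ∀ n, 0 ≤ y n)
    (D : ℝ) (hD : ∑ n, y n < D) (hD0 : 0 < D) :
    Summable (fun i : Fin N → ℕ =>
      Real.Gamma (M + ∑ n, (i n : ℝ)) * D ^ (-(∑ n, (i n : ℝ))) *
        ∏ n, (Real.Gamma ((i n : ℝ) + α) * y n ^ i n /
          (Real.Gamma ((i n : ℝ) + M) * ((i n).factorial : ℝ)))) := by
  have hM : 0 < M := hα.trans_le hαM
  have hS : ∑ n, y n / D < 1 := by
    rw [← sum_div]
    exact (div_lt_one hD0).2 hD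
  have hmain := (summable_gamma_mul_prod M hM (fun n => y n / D)
    (fun n => div_nonneg (hy n) hD0.le) hS).mul_left ((Real.Gamma α / Real.Gamma M) ^ N)
  have hG (i : Fin N → ℕ) : 0 < Real.Gamma (M + ∑ n, (i n : ℝ)) :=
    Real.Gamma_pos_of_pos (by positivity)
  have hGα (k : ℕ) : 0 < Real.Gamma ((k : ℝ) + α) := Real.Gamma_pos_of_pos (by positivity)
  have hGM (k : ℕ) : 0 < Real.Gamma ((k : ℝ) + M) := Real.Gamma_pos_of_pos (by positivity)
  have hfac (i : Fin N → ℕ) (n : Fin N) : 0 ≤ Real.Gamma ((i n : ℝ) + α) * y n ^ i n /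
      (Real.Gamma ((i n : ℝ) + M) * ((i n).factorial : ℝ)) :=
    div_nonneg (mul_nonneg (hGα _).le (pow_nonneg (hy n) _))
      (mul_nonneg (hGM _).le (Nat.cast_nonneg _))
  refine Summable.of_nonneg_of_le (fun i => ?_) (fun i => ?_) hmain
  · exact mul_nonneg (mul_nonneg (hG i).le (Real.rpow_nonneg hD0.le _))
      (prod_nonneg fun n _ => hfac i n)
  · have hDpow : D ^ (-(∑ n, (i n : ℝ))) = ∏ n, (D ^ i n)⁻¹ := by
      rw [Real.rpow_neg hD0.le, ← Nat.cast_sum, Real.rpow_natCast, prod_inv_distrib,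
        prod_pow_eq_pow_sum]
    have hconst : (Real.Gamma α / Real.Gamma M) ^ N =
        ∏ _n : Fin N, Real.Gamma α / Real.Gamma M := by rw [prod_const, card_univ, Fintype.card_fin]
    rw [hDpow, hconst, mul_assoc, ← prod_mul_distrib, mul_left_comm, ← prod_mul_distrib]
    refine mul_le_mul_of_nonneg_left (prod_le_prod (fun n _ => ?_) fun n _ => ?_) (hG i).le
    · exact mul_nonneg (inv_nonneg.2 (pow_nonneg hD0.le _)) (hfac i n)
    · have e : (D ^ i n)⁻¹ * (Real.Gamma ((i n : ℝ) + α) * y n ^ i n /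
          (Real.Gamma ((i n : ℝ) + M) * ((i n).factorial : ℝ))) =
          Real.Gamma ((i n : ℝ) + α) / Real.Gamma ((i n : ℝ) + M) *
            ((y n / D) ^ i n / ((i n).factorial : ℝ)) := by
        rw [div_pow]
        ring
      rw [e]
      exact mul_le_mul_of_nonneg_right (gamma_ratio_le α M hα hαM (i n))
        (div_nonneg (pow_nonneg (div_nonneg (hy n) hD0.le) _) (Nat.cast_nonneg _))
end
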